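/- Let D be a small category and let X : D ⥤ Type be a D-set. Suppose X is isomorphic both to ∐_{i∈I} O_i and to ∐_{j∈J} Õ_j, where every O_i and every Õ_j is a D-orbit. Then there is a bijection h : I → J such that O_i is isomorphic to Õ_{h(i)} for every i ∈ I; that is, the decomposition of a D-set into orbits is unique up to reordering and isomorphic replacement of the factors. -/

import Mathlib

open CategoryTheory Limits Opposite

/-!
Call an object `A` connected if every morphism from `A` to a coproduct factors through exactly one
summand, in exactly one way. Suppose `∐ O ≅ ∐ Q` with all summands connected. The inclusion of `O i`
factors through some `Q j`, whose inclusion factors back through some `O k`. The composite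
`O i ⟶ Q j ⟶ O k` is compatible with the inclusions of `O i` and `O k`, so uniqueness forces
`k = i` and the composite to be the identity; the same argument on the other side gives
`O i ≅ Q j`.

An orbit is connected: the index of the summand in which an element lands is unchanged along the
morphisms of the category of elements, which is connected because the colimit is a point.
-/

universe w v u

section ConnectedObject

variable {C : Type u} [Category.{v} C]

/-- An object `A` is connected if `Hom(A, -)` preserves coproducts: every morphism from `A` to a
coproduct factors through a unique summand, in a unique way. The coproducts are those indexed by
types in `Type w`, and preservation is spelled out as bijectivity of the comparison map. -/
def IsConnectedObject (A : C) : Prop :=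
  ∀ ⦃J : Type w⦄ (Q : J → C) [HasCoproduct Q],
    Function.Bijective fun p : Σ j, A ⟶ Q j => p.2 ≫ Sigma.ι Q p.1

namespace IsConnectedObject

variable {A : C} {J : Type w} {Q : J → C} [HasCoproduct Q]

theorem exists_comp_sigmaι_eq (hA : IsConnectedObject.{w} A) (g : A ⟶ ∐ Q) :
    ∃ j, ∃ f : A ⟶ Q j, f ≫ Sigma.ι Q j = g :=
  let ⟨⟨j, f⟩, hf⟩ := (hA Q).surjective g
  ⟨j, f, hf⟩

theorem index_eq_of_comp_sigmaι_eq (hA : IsConnectedObject.{w} A) {j j' : J} {f : A ⟶ Q j}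
    {f' : A ⟶ Q j'} (h : f ≫ Sigma.ι Q j = f' ≫ Sigma.ι Q j') : j = j' :=
  congrArg Sigma.fst ((hA Q).injective (a₁ := ⟨j, f⟩) (a₂ := ⟨j', f'⟩) h)

theorem eq_of_comp_sigmaι_eq (hA : IsConnectedObject.{w} A) {j : J} {f f' : A ⟶ Q j}
    (h : f ≫ Sigma.ι Q j = f' ≫ Sigma.ι Q j) : f = f' :=
  eq_of_heq (Sigma.mk.inj ((hA Q).injective (a₁ := ⟨j, f⟩) (a₂ := ⟨j, f'⟩) h)).2

end IsConnectedObject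

section SigmaIso

variable {I J : Type w} {O : I → C} {Q : J → C} [HasCoproduct O] [HasCoproduct Q]

theorem exists_iso_comp_sigmaι_eq (hO : ∀ i, IsConnectedObject.{w} (O i))
    (hQ : ∀ j, IsConnectedObject.{w} (Q j)) (e : ∐ O ≅ ∐ Q) (i : I) :
    ∃ j, ∃ φ : O i ≅ Q j, φ.hom ≫ Sigma.ι Q j = Sigma.ι O i ≫ e.hom := by
  obtain ⟨j, f, hf⟩ := (hO i).exists_comp_sigmaι_eq (Sigma.ι O i ≫ e.hom)
  obtain ⟨k, g, hg⟩ := (hQ j).exists_comp_sigmaι_eq (Sigma.ι Q j ≫ e.inv)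
  have hfg : (f ≫ g) ≫ Sigma.ι O k = 𝟙 _ ≫ Sigma.ι O i := by
    simp only [Category.assoc, hg, reassoc_of% hf, e.hom_inv_id, Category.comp_id, Category.id_comp]
  obtain rfl : k = i := (hO i).index_eq_of_comp_sigmaι_eq hfg
  have hgf : (g ≫ f) ≫ Sigma.ι Q j = 𝟙 _ ≫ Sigma.ι Q j := by
    simp only [Category.assoc, hf, reassoc_of% hg, e.inv_hom_id, Category.comp_id, Category.id_comp]
  exact ⟨j, ⟨f, g, (hO k).eq_of_comp_sigmaι_eq hfg, (hQ j).eq_of_comp_sigmaι_eq hgf⟩, hf⟩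

theorem exists_equiv_nonempty_iso_of_sigma_iso (hO : ∀ i, IsConnectedObject.{w} (O i))
    (hQ : ∀ j, IsConnectedObject.{w} (Q j)) (e : ∐ O ≅ ∐ Q) :
    ∃ h : I ≃ J, ∀ i, Nonempty (O i ≅ Q (h i)) := by
  choose h φ hφ using exists_iso_comp_sigmaι_eq hO hQ e
  choose k ψ hψ using exists_iso_comp_sigmaι_eq hQ hO e.symm
  have hkh (i : I) : k (h i) = i := by
    refine (hO i).index_eq_of_comp_sigmaι_eq (f := (φ i ≪≫ ψ (h i)).hom) (f' := 𝟙 _) ?_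
    simp [hψ, reassoc_of% hφ]
  have hhk (j : J) : h (k j) = j := by
    refine (hQ j).index_eq_of_comp_sigmaι_eq (f := (ψ j ≪≫ φ (k j)).hom) (f' := 𝟙 _) ?_
    simp [hφ, reassoc_of% hψ]
  exact ⟨⟨h, k, hkh, hhk⟩, fun i => ⟨φ i⟩⟩

end SigmaIso

end ConnectedObject

section TypeValued

variable {D : Type u} [Category.{v} D]

theorem exists_comp_eq_of_range_le {A B F : D ⥤ Type w} {g : A ⟶ F} {m : B ⟶ F} [Mono m]
    (h : Subfunctor.range g ≤ Subfunctor.range m) : ∃ f : A ⟶ B, f ≫ m = g :=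
  ⟨Subfunctor.lift g h ≫ inv (Subfunctor.toRange m), by
    rw [Category.assoc, (IsIso.inv_comp_eq _).2 (Subfunctor.toRange_ι m).symm, Subfunctor.lift_ι]⟩

theorem isConnected_elements_of_colimit_equiv_punit {F : D ⥤ Type w} [HasColimit F]
    (e : colimit F ≃ PUnit) : IsConnected F.Elements := by
  let e' : F.ColimitType ≃ PUnit := (Types.colimitEquivColimitType F).symm.trans e
  have : Subsingleton F.ColimitType := e'.subsingleton
  obtain ⟨d, a, -⟩ := F.ιColimitType_jointly_surjective (e'.symm ⟨⟩)
  have : Nonempty F.Elements := ⟨d, a⟩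
  refine IsConnected.of_constant_of_preserves_morphisms fun {α} t ht x y => ?_
  let c : F.CoconeTypes :=
    { pt := α
      ι := fun d a => t ⟨d, a⟩
      ι_naturality := fun u => funext fun a => (ht ⟨u, rfl⟩).symm }
  exact congrArg (F.descColimitType c)
    (Subsingleton.elim (F.ιColimitType x.1 x.2) (F.ιColimitType y.1 y.2))

section Coproduct

variable {J : Type w} (Q : J → D ⥤ Type w)

/-- Coproducts of functors to types are computed objectwise. -/
noncomputable def isColimitCofanSigmaApp (d : D) :
    IsColimit (Cofan.mk ((∐ Q).obj d) fun j => (Sigma.ι Q j).app d) :=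
  isColimitOfHasCoproductOfPreservesColimit ((evaluation D (Type w)).obj d) Q

theorem exists_sigmaι_app_eq {d : D} (x : (∐ Q).obj d) :
    ∃ j, ∃ y : (Q j).obj d, (Sigma.ι Q j).app d y = x :=
  Cofan.inj_jointly_surjective_of_isColimit (isColimitCofanSigmaApp Q d) x

variable {Q} in
theorem index_eq_of_sigmaι_app_eq {j j' : J} {d : D} {y : (Q j).obj d} {y' : (Q j').obj d}
    (h : (Sigma.ι Q j).app d y = (Sigma.ι Q j').app d y') : j = j' :=
  Cofan.eq_of_inj_apply_eq_of_isColimit (isColimitCofanSigmaApp Q d) y y' h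

instance mono_sigmaι (j : J) : Mono (Sigma.ι Q j) :=
  have (d : D) : Mono ((Sigma.ι Q j).app d) :=
    (mono_iff_injective _).2 (Cofan.inj_injective_of_isColimit (isColimitCofanSigmaApp Q d) j)
  NatTrans.mono_of_mono_app _

end Coproduct

variable {A : D ⥤ Type w} {J : Type w} {Q : J → D ⥤ Type w}

theorem exists_range_le_range_sigmaι [IsConnected A.Elements] (g : A ⟶ ∐ Q) :
    ∃ j, Subfunctor.range g ≤ Subfunctor.range (Sigma.ι Q j) := by
  choose index y hy using fun x : A.Elements => exists_sigmaι_app_eq Q (g.app x.1 x.2)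
  have index_eq (x x' : A.Elements) (u : x ⟶ x') : index x = index x' := by
    refine index_eq_of_sigmaι_app_eq (y := (Q (index x)).map u.1 (y x)) (y' := y x') ?_
    rw [NatTrans.naturality_apply, hy, hy, ← NatTrans.naturality_apply,
      CategoryOfElements.map_snd]
  obtain ⟨j, hj⟩ := constant_of_preserves_morphisms' index index_eq
  refine ⟨j, ?_⟩
  rintro d _ ⟨a, rfl⟩
  exact hj ⟨d, a⟩ ▸ ⟨y ⟨d, a⟩, hy ⟨d, a⟩⟩

theorem isConnectedObject_of_isConnected_elements (hA : IsConnected A.Elements) :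
    IsConnectedObject.{w} A := by
  refine fun J Q _ => ⟨?_, fun g => ?_⟩
  · rintro ⟨j, f⟩ ⟨j', f'⟩ (h : f ≫ Sigma.ι Q j = f' ≫ Sigma.ι Q j')
    obtain ⟨d, a⟩ : A.Elements := Classical.arbitrary _
    obtain rfl : j = j' :=
      index_eq_of_sigmaι_app_eq (ConcreteCategory.congr_hom (NatTrans.congr_app h d) a)
    rw [(cancel_mono (Sigma.ι Q j)).1 h]
  · obtain ⟨j, hj⟩ := exists_range_le_range_sigmaι g
    obtain ⟨f, hf⟩ := exists_comp_eq_of_range_le hj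
    exact ⟨⟨j, f⟩, hf⟩

/-- Connectedness of the category of elements says that a functor is an orbit without requiring
its colimit to exist. -/
theorem orbit_decomposition_unique_general {I J : Type w} {O : I → D ⥤ Type w}
    {Q : J → D ⥤ Type w} (hO : ∀ i, IsConnected (O i).Elements)
    (hQ : ∀ j, IsConnected (Q j).Elements) (e : ∐ O ≅ ∐ Q) :
    ∃ h : I ≃ J, ∀ i, Nonempty (O i ≅ Q (h i)) :=
  exists_equiv_nonempty_iso_of_sigma_iso
    (fun i => isConnectedObject_of_isConnected_elements (hO i))
    (fun j => isConnectedObject_of_isConnected_elements (hQ j)) e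

end TypeValued

/-- The decomposition of a `D`-set into `D`-orbits is unique up to
reordering and isomorphic replacement of the factors. -/
theorem orbit_decomposition_unique {D : Type} [SmallCategory D] (X : D ⥤ Type)
    (I J : Type) (O : I → D ⥤ Type) (Q : J → D ⥤ Type)
    (hO : ∀ i, Nonempty (colimit (O i) ≃ PUnit))
    (hQ : ∀ j, Nonempty (colimit (Q j) ≃ PUnit))
    (e₁ : X ≅ ∐ O) (e₂ : X ≅ ∐ Q) :
    ∃ h : I ≃ J, ∀ i : I, Nonempty (O i ≅ Q (h i)) :=
  orbit_decomposition_unique_general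
    (fun i => isConnected_elements_of_colimit_equiv_punit (hO i).some)
    (fun j => isConnected_elements_of_colimit_equiv_punit (hQ j).some) (e₁.symm ≪≫ e₂)
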